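/- Assume b̃ > 0 and fix μ > 0, ξ > 0, σ > 0. Define v(t,r,x) = x·M(T−t,r) + μ(T−t)·M(T−t,r) + ξ·γ(t,r) on [0,T) × ℝ × ℝ. Then v solves the Hamilton–Jacobi–Bellman equation: for every (t,r,x) ∈ (0,T) × ℝ × ℝ, ∂_t v + μ·∂_x v + (σ²/2)·∂_{xx} v + a(b−r)·∂_r v + (δ²/2)·∂_{rr} v − r·v + ξ·max(1 − ∂_x v, 0) = 0, where ξ·max(1 − ∂_x v, 0) = sup_{0 ≤ c ≤ ξ} c·(1 − ∂_x v). -/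

import Mathlib

open Real Filter MeasureTheory intervalIntegral

noncomputable def M (a δ b u r : ℝ) : ℝ :=
  Real.exp (-(b - δ^2/(2*a^2))*u + ((b - δ^2/(2*a^2)) - r)/a * (1 - Real.exp (-(a*u)))
    - δ^2/(4*a^3) * (1 - Real.exp (-(a*u)))^2)

/-- The separating curve `α(t)`. -/
noncomputable def alphaCurve (a δ b T t : ℝ) : ℝ :=
  (b - δ^2/(2*a^2)) * (1 - a*(T - t)/(1 - Real.exp (-(a*(T - t)))))
    - δ^2/(4*a^2) * (1 - Real.exp (-(a*(T - t))))

/-- The Gaussian kernel `φ(z,u,r)`. -/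
noncomputable def phiKer (a δ b z u r : ℝ) : ℝ :=
  (Real.sqrt (2*Real.pi*(δ^2/(2*a))*(1 - Real.exp (-(2*a*u)))))⁻¹ *
    Real.exp (-(z - r*Real.exp (-(a*u)) - b*(1 - Real.exp (-(a*u)))
      + δ^2/(2*a^2)*(1 - Real.exp (-(a*u)))^2)^2
      / (2*(δ^2/(2*a))*(1 - Real.exp (-(2*a*u)))))

/-- The function `γ(t,r) = ∫_0^{T−t} ∫_{α(u+t)}^∞ M(u,r)(1−M(T−u−t,z))φ(z,u,r) dz du`. -/
noncomputable def gammaFun (a δ b T t r : ℝ) : ℝ :=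
  ∫ u in (0:ℝ)..(T - t), ∫ z in Set.Ioi (alphaCurve a δ b T (u + t)),
    M a δ b u r * (1 - M a δ b (T - u - t) z) * phiKer a δ b z u r

/-- The candidate value function
`v(t,r,x) = x·M(T−t,r) + μ(T−t)·M(T−t,r) + ξ·γ(t,r)`. -/
noncomputable def vFun (a δ b T μ ξ t r x : ℝ) : ℝ :=
  x * M a δ b (T - t) r + μ*(T - t)*M a δ b (T - t) r + ξ * gammaFun a δ b T t r

/-! Since a bond maturing at `T` is worth exactly `1` on the curve `α`, the inner integral of `γ` is
Margrabe's price of the option to exchange an asset worth `M(T - t, r)` for one worth `M(u, r)`.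
Each derivative of such a price is a linear combination of its deltas and its vega. Increasing the
lag `u` and the time to maturity `τ = T - t` together acts on it as the generator of the short rate
discounted at `r`, so integrating in `u` over `(0, τ)` leaves only boundary terms: the price
vanishes as `u → τ` and tends to `max (1 - M(τ, r)) 0` as `u → 0`. The latter cancels the
consumption term of the equation. -/

open Set Topology ProbabilityTheory

local notation "Φ" => cdf (gaussianReal 0 1)
local notation "ϕ" => gaussianPDFReal 0 1

section Gaussian

lemma continuous_gaussianPDFReal (m : ℝ) (v : NNReal) : Continuous (gaussianPDFReal m v) := by
  rw [gaussianPDFReal_def]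
  fun_prop

lemma cdf_gaussianReal_eq_setIntegral (m : ℝ) {v : NNReal} (hv : v ≠ 0) (x : ℝ) :
    cdf (gaussianReal m v) x = ∫ y in Iic x, gaussianPDFReal m v y := by
  rw [cdf_eq_real, measureReal_def, gaussianReal_apply_eq_integral m hv, ENNReal.toReal_ofReal]
  exact setIntegral_nonneg measurableSet_Iic fun y _ => gaussianPDFReal_nonneg m v y

lemma hasDerivAt_cdf_gaussianReal (m : ℝ) {v : NNReal} (hv : v ≠ 0) (x : ℝ) :
    HasDerivAt (cdf (gaussianReal m v)) (gaussianPDFReal m v x) x := by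
  have hint : ∀ s, IntegrableOn (gaussianPDFReal m v) s :=
    fun s => (integrable_gaussianPDFReal m v).integrableOn
  have hcdf : cdf (gaussianReal m v) =
      fun x => cdf (gaussianReal m v) 0 + ∫ y in (0 : ℝ)..x, gaussianPDFReal m v y := by
    ext x
    rw [cdf_gaussianReal_eq_setIntegral m hv, cdf_gaussianReal_eq_setIntegral m hv,
      ← integral_Iic_sub_Iic (hint _) (hint _), add_sub_cancel]
  rw [hcdf]
  exact ((continuous_gaussianPDFReal m v).integral_hasStrictDerivAt 0 x).hasDerivAt.const_add _

lemma gaussianPDFReal_zero_one_le_one (x : ℝ) : ϕ x ≤ 1 := by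
  have hexp : exp (-(x - 0) ^ 2 / (2 * (1 : NNReal))) ≤ 1 :=
    exp_le_one_iff.2 (div_nonpos_of_nonpos_of_nonneg (neg_nonpos.2 (sq_nonneg _)) (by positivity))
  have hsqrt : (√(2 * π * (1 : NNReal)))⁻¹ ≤ 1 := by
    refine inv_le_one_of_one_le₀ (one_le_sqrt.2 ?_)
    rw [NNReal.coe_one]
    linarith [pi_gt_three]
  exact mul_le_one₀ hsqrt (exp_pos _).le hexp

lemma abs_cdf_gaussianReal_zero_one_sub_le (x y : ℝ) : |Φ x - Φ y| ≤ |x - y| := by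
  have hbound : ∀ z ∈ (univ : Set ℝ), ‖ϕ z‖ ≤ 1 := fun z _ => by
    rw [norm_of_nonneg (gaussianPDFReal_nonneg 0 1 z)]
    exact gaussianPDFReal_zero_one_le_one z
  simpa using convex_univ.norm_image_sub_le_of_norm_hasDerivWithin_le
    (fun z _ => (hasDerivAt_cdf_gaussianReal 0 one_ne_zero z).hasDerivWithinAt) hbound
    (mem_univ y) (mem_univ x)

lemma abs_cdf_le_one (μ : Measure ℝ) (x : ℝ) : |cdf μ x| ≤ 1 := by
  rw [abs_of_nonneg (cdf_nonneg μ x)]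
  exact cdf_le_one μ x

lemma setIntegral_Ioi_gaussianPDFReal {s : ℝ} (hs : 0 < s) (m c : ℝ) :
    ∫ z in Ioi c, gaussianPDFReal m (s ^ 2).toNNReal z = Φ ((m - c) / s) := by
  have hv : (s ^ 2).toNNReal ≠ 0 := by simpa using hs.ne'
  have hlaw : gaussianReal m (s ^ 2).toNNReal = (gaussianReal 0 1).map fun x => m - s * x := by
    have hcomp := Measure.map_map (μ := gaussianReal 0 1) (measurable_const_sub m)
      (measurable_const_mul s)
    rw [gaussianReal_map_const_mul, gaussianReal_map_const_sub, mul_zero, sub_zero, mul_one,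
      ← Real.toNNReal_of_nonneg (sq_nonneg s)] at hcomp
    exact hcomp
  have hpre : (fun x => m - s * x) ⁻¹' Ioi c = Iio ((m - c) / s) := by
    ext x
    rw [mem_preimage, mem_Ioi, mem_Iio, lt_div_iff₀ hs, lt_sub_comm, mul_comm]
  have := nullSingletonClass_gaussianReal (μ := 0) (v := 1) one_ne_zero
  rw [cdf_eq_real, measureReal_congr Iio_ae_eq_Iic.symm, ← hpre,
    ← map_measureReal_apply (by fun_prop) measurableSet_Ioi, ← hlaw, measureReal_def,
    gaussianReal_apply_eq_integral m hv, ENNReal.toReal_ofReal]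
  exact setIntegral_nonneg measurableSet_Ioi fun z _ => gaussianPDFReal_nonneg _ _ z

lemma exp_mul_gaussianPDFReal (t m : ℝ) (v : NNReal) (z : ℝ) :
    exp (t * z) * gaussianPDFReal m v z
      = exp (m * t + v * t ^ 2 / 2) * gaussianPDFReal (m + v * t) v z := by
  rcases eq_or_ne v 0 with rfl | hv
  · simp
  have hv' : (v : ℝ) ≠ 0 := NNReal.coe_ne_zero.2 hv
  simp only [gaussianPDFReal]
  rw [mul_left_comm, mul_left_comm (exp (m * t + v * t ^ 2 / 2)), ← exp_add, ← exp_add]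
  congr 2
  field_simp
  ring

end Gaussian

section Exchange

/-- The normalised log-moneyness `d₊` of the option to exchange an asset worth `Q` for one worth
`P`, when their ratio has total volatility `v`. -/
noncomputable def dPlus (P Q v : ℝ) : ℝ := log (P / Q) / v + v / 2

/-- Margrabe's price of the option to exchange an asset worth `Q` for one worth `P`, when their
ratio has total volatility `v`; the classical `d₋` is written `d₊ - v`. -/
noncomputable def exchangeValue (P Q v : ℝ) : ℝ :=
  P * Φ (dPlus P Q v) - Q * Φ (dPlus P Q v - v)

/-- The linear combination with coefficients `A`, `-B` and `g` of the Greeks of the exchange option: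
the deltas `Φ (d₊)`, `Φ (d₋)` and the vega `P ϕ(d₊)`. -/
noncomputable def exchangeGreeks (P Q v A B g : ℝ) : ℝ :=
  A * Φ (dPlus P Q v) - B * Φ (dPlus P Q v - v) + g * (P * ϕ (dPlus P Q v))

lemma exchangeValue_eq_exchangeGreeks (P Q v : ℝ) :
    exchangeValue P Q v = exchangeGreeks P Q v P Q 0 := by
  rw [exchangeValue, exchangeGreeks, zero_mul, add_zero]

lemma abs_exchangeGreeks_le (P Q v A B g : ℝ) :
    |exchangeGreeks P Q v A B g| ≤ |A| + |B| + |g| * |P| := by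
  have hmul : ∀ c y : ℝ, |y| ≤ 1 → |c * y| ≤ |c| := fun c y hy => by
    rw [abs_mul]
    exact mul_le_of_le_one_right (abs_nonneg c) hy
  have hϕ : |ϕ (dPlus P Q v)| ≤ 1 := by
    rw [abs_of_nonneg (gaussianPDFReal_nonneg _ _ _)]
    exact gaussianPDFReal_zero_one_le_one _
  refine (abs_add_le _ _).trans (add_le_add ((abs_sub _ _).trans (add_le_add ?_ ?_)) ?_)
  · exact hmul _ _ (abs_cdf_le_one _ _)
  · exact hmul _ _ (abs_cdf_le_one _ _)
  · rw [abs_mul]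
    exact mul_le_mul_of_nonneg_left (hmul _ _ hϕ) (abs_nonneg g)

lemma mul_gaussianPDFReal_dPlus_sub {P Q v : ℝ} (hP : 0 < P) (hQ : 0 < Q) (hv : v ≠ 0) :
    Q * ϕ (dPlus P Q v - v) = P * ϕ (dPlus P Q v) := by
  have hratio : P / Q = exp (dPlus P Q v * v - v ^ 2 / 2) := by
    rw [← exp_log (div_pos hP hQ), dPlus]
    congr 1
    field_simp
    ring
  rw [div_eq_iff hQ.ne'] at hratio
  set d := dPlus P Q v
  have hexp : exp (-(d - v - 0) ^ 2 / (2 * 1))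
      = exp (d * v - v ^ 2 / 2) * exp (-(d - 0) ^ 2 / (2 * 1)) := by
    rw [← exp_add]
    congr 1
    ring
  simp only [gaussianPDFReal, NNReal.coe_one]
  rw [hexp]
  linear_combination (-(√(2 * π * 1))⁻¹ * exp (-(d - 0) ^ 2 / (2 * 1))) * hratio

lemma hasDerivAt_dPlus {P Q v : ℝ → ℝ} {P' Q' v' x : ℝ} (hP : HasDerivAt P P' x)
    (hQ : HasDerivAt Q Q' x) (hv : HasDerivAt v v' x) (hP₀ : P x ≠ 0) (hQ₀ : Q x ≠ 0)
    (hv₀ : v x ≠ 0) :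
    HasDerivAt (fun y => dPlus (P y) (Q y) (v y))
      ((P' / P x - Q' / Q x) / v x - log (P x / Q x) * v' / v x ^ 2 + v' / 2) x := by
  have hlog := (hP.div hQ hQ₀).log (div_ne_zero hP₀ hQ₀)
  refine ((hlog.div hv hv₀).add (hv.div_const 2)).congr_deriv ?_
  simp only [Pi.div_apply]
  field_simp

/-- The terms in `d'` cancel for `α = β` because `Q ϕ(d₋) = P ϕ(d₊)`. -/
lemma hasDerivAt_exchangeGreeks {P Q v : ℝ → ℝ} {P' Q' v' d' x : ℝ} (α β : ℝ)
    (hP : HasDerivAt P P' x) (hQ : HasDerivAt Q Q' x) (hv : HasDerivAt v v' x)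
    (hd : HasDerivAt (fun y => dPlus (P y) (Q y) (v y)) d' x)
    (hP₀ : 0 < P x) (hQ₀ : 0 < Q x) (hv₀ : v x ≠ 0) :
    HasDerivAt (fun y => exchangeGreeks (P y) (Q y) (v y) (α * P y) (β * Q y) 0)
      (exchangeGreeks (P x) (Q x) (v x) (α * P') (β * Q') ((α - β) * d' + β * v')) x := by
  have hΦ := hasDerivAt_cdf_gaussianReal 0 (one_ne_zero (α := NNReal))
  have h := ((hP.const_mul α).mul ((hΦ _).comp x hd)).sub
    ((hQ.const_mul β).mul ((hΦ _).comp x (hd.sub hv)))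
  have hcancel := mul_gaussianPDFReal_dPlus_sub hP₀ hQ₀ hv₀
  simp only [exchangeGreeks, zero_mul, add_zero]
  refine h.congr_deriv ?_
  simp only [Function.comp_apply, Pi.sub_apply]
  linear_combination (-β * (d' - v')) * hcancel

lemma hasDerivAt_exchangeValue {P Q v : ℝ → ℝ} {P' Q' v' x : ℝ} (hP : HasDerivAt P P' x)
    (hQ : HasDerivAt Q Q' x) (hv : HasDerivAt v v' x) (hP₀ : 0 < P x) (hQ₀ : 0 < Q x)
    (hv₀ : v x ≠ 0) :
    HasDerivAt (fun y => exchangeValue (P y) (Q y) (v y))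
      (exchangeGreeks (P x) (Q x) (v x) P' Q' v') x := by
  have hd := hasDerivAt_dPlus hP hQ hv hP₀.ne' hQ₀.ne' hv₀
  simpa [exchangeValue_eq_exchangeGreeks] using
    hasDerivAt_exchangeGreeks 1 1 hP hQ hv hd hP₀ hQ₀ hv₀

@[fun_prop]
lemma measurable_exchangeGreeks {α : Type*} [MeasurableSpace α] {P Q v A B g : α → ℝ}
    (hP : Measurable P) (hQ : Measurable Q) (hv : Measurable v) (hA : Measurable A)
    (hB : Measurable B) (hg : Measurable g) :
    Measurable fun x => exchangeGreeks (P x) (Q x) (v x) (A x) (B x) (g x) := by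
  have hΦ : Measurable Φ := (monotone_cdf _).measurable
  have hd : Measurable fun x => dPlus (P x) (Q x) (v x) := by
    unfold dPlus
    fun_prop
  unfold exchangeGreeks
  fun_prop

lemma tendsto_exchangeValue {ι : Type*} {l : Filter ι} {P Q v : ι → ℝ} {p q : ℝ} (hp : 0 < p)
    (hq : 0 < q) (hP : Tendsto P l (𝓝 p)) (hQ : Tendsto Q l (𝓝 q)) (hv : Tendsto v l (𝓝[>] 0)) :
    Tendsto (fun i => exchangeValue (P i) (Q i) (v i)) l (𝓝 (max (p - q) 0)) := by
  have hv₀ : Tendsto v l (𝓝 0) := hv.mono_right nhdsWithin_le_nhds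
  have hlog : Tendsto (fun i => log (P i / Q i)) l (𝓝 (log (p / q))) :=
    (hP.div hQ hq.ne').log (div_pos hp hq).ne'
  have hinv : Tendsto (fun i => (v i)⁻¹) l atTop := tendsto_inv_nhdsGT_zero.comp hv
  have hhalf : Tendsto (fun i => v i / 2) l (𝓝 0) := by simpa using hv₀.div_const 2
  have hdiff : Tendsto (fun i => P i - Q i) l (𝓝 (p - q)) := hP.sub hQ
  have htime : Tendsto (fun i => Q i * (Φ (dPlus (P i) (Q i) (v i))
      - Φ (dPlus (P i) (Q i) (v i) - v i))) l (𝓝 0) := by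
    rw [← mul_zero q]
    refine hQ.mul (squeeze_zero_norm (fun i => ?_) (by simpa using hv₀.abs))
    simpa using abs_cdf_gaussianReal_zero_one_sub_le (dPlus (P i) (Q i) (v i))
      (dPlus (P i) (Q i) (v i) - v i)
  have hintrinsic : Tendsto (fun i => (P i - Q i) * Φ (dPlus (P i) (Q i) (v i))) l
      (𝓝 (max (p - q) 0)) := by
    rcases lt_trichotomy p q with hlt | rfl | hgt
    · have hd : Tendsto (fun i => dPlus (P i) (Q i) (v i)) l atBot :=
        (hlog.neg_mul_atTop (log_neg (div_pos hp hq) ((div_lt_one hq).2 hlt)) hinv).atBot_add hhalf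
      simpa [hlt.le] using hdiff.mul ((tendsto_cdf_atBot _).comp hd)
    · rw [sub_self] at hdiff ⊢
      rw [max_self]
      refine squeeze_zero_norm (fun i => ?_) (by simpa using hdiff.abs)
      rw [norm_mul]
      exact mul_le_of_le_one_right (norm_nonneg _) (abs_cdf_le_one _ _)
    · have hd : Tendsto (fun i => dPlus (P i) (Q i) (v i)) l atTop :=
        (hlog.pos_mul_atTop (log_pos ((one_lt_div hq).2 hgt)) hinv).atTop_add hhalf
      simpa [hgt.le] using hdiff.mul ((tendsto_cdf_atTop _).comp hd)
  rw [← add_zero (max (p - q) 0)]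
  refine (hintrinsic.add htime).congr fun i => ?_
  rw [exchangeValue]
  ring

lemma setIntegral_Ioi_one_sub_exp_mul_gaussianPDFReal {P β s : ℝ} (hP : P ≠ 0) (hβ : 0 < β)
    (hs : 0 < s) (m c : ℝ) :
    ∫ z in Ioi c, P * (1 - exp (-(β * (z - c)))) * gaussianPDFReal m (s ^ 2).toNNReal z
      = exchangeValue P (P * exp (β ^ 2 * s ^ 2 / 2 - β * (m - c))) (β * s) := by
  set Q := P * exp (β ^ 2 * s ^ 2 / 2 - β * (m - c)) with hQ
  have hsplit : ∀ z, P * (1 - exp (-(β * (z - c)))) * gaussianPDFReal m (s ^ 2).toNNReal z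
      = P * gaussianPDFReal m (s ^ 2).toNNReal z
        - Q * gaussianPDFReal (m - s ^ 2 * β) (s ^ 2).toNNReal z := fun z => by
    have htilt := exp_mul_gaussianPDFReal (-β) m (s ^ 2).toNNReal z
    rw [Real.coe_toNNReal _ (sq_nonneg s), mul_neg (s ^ 2), ← sub_eq_add_neg] at htilt
    rw [hQ, show -(β * (z - c)) = β * c + -β * z by ring, exp_add,
      show β ^ 2 * s ^ 2 / 2 - β * (m - c) = β * c + (m * -β + s ^ 2 * (-β) ^ 2 / 2) by ring,
      exp_add]
    linear_combination -(P * exp (β * c)) * htilt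
  have hd : dPlus P Q (β * s) = (m - c) / s := by
    rw [dPlus, hQ, div_mul_cancel_left₀ hP, log_inv, log_exp]
    field_simp
    ring
  have hint : ∀ m', Integrable (gaussianPDFReal m' (s ^ 2).toNNReal) :=
    fun m' => integrable_gaussianPDFReal _ _
  simp_rw [hsplit]
  rw [MeasureTheory.integral_sub ((hint _).const_mul _).integrableOn
      ((hint _).const_mul _).integrableOn,
    MeasureTheory.integral_const_mul, MeasureTheory.integral_const_mul,
    setIntegral_Ioi_gaussianPDFReal hs, setIntegral_Ioi_gaussianPDFReal hs, exchangeValue, hd]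
  congr 3
  field_simp
  ring

end Exchange

section Leibniz

variable {E : Type*} [NormedAddCommGroup E] {F : ℝ → ℝ → E} {c u τ₀ R : ℝ} {K : NNReal}

lemma lipschitzOnWith_indicator_Iio_of_vanishing_diagonal (hdiag : F u u = 0) (hu : u ≤ R)
    (hF : LipschitzOnWith K (F · u) (Icc u R)) :
    LipschitzOnWith K (fun τ => (Iio τ).indicator (F τ) u) (Iic R) := by
  have hmax : (fun τ => (Iio τ).indicator (F τ) u) = (F · u) ∘ fun τ => max τ u := by
    ext τ
    rcases lt_or_ge u τ with h | h
    · rw [indicator_of_mem (mem_Iio.2 h), Function.comp_apply, max_eq_left h.le]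
    · rw [indicator_of_notMem (notMem_Iio.2 h), Function.comp_apply, max_eq_right h, hdiag]
  rw [hmax, ← mul_one K]
  exact hF.comp (LipschitzWith.id.max_const u).lipschitzOnWith
    fun τ hτ => ⟨le_max_right τ u, max_le hτ hu⟩

variable [NormedSpace ℝ E] {F' : ℝ → E}

lemma hasDerivAt_indicator_Iio (hu : u ≠ τ₀) (hF : u < τ₀ → HasDerivAt (F · u) (F' u) τ₀) :
    HasDerivAt (fun τ => (Iio τ).indicator (F τ) u) ((Iio τ₀).indicator F' u) τ₀ := by
  rcases hu.lt_or_gt with h | h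
  · rw [indicator_of_mem (mem_Iio.2 h)]
    exact (hF h).congr_of_eventuallyEq
      ((lt_mem_nhds h).mono fun τ hτ => indicator_of_mem (mem_Iio.2 hτ) _)
  · rw [indicator_of_notMem (notMem_Iio.2 h.le)]
    exact (hasDerivAt_const τ₀ 0).congr_of_eventuallyEq
      ((gt_mem_nhds h).mono fun τ hτ => indicator_of_notMem (notMem_Iio.2 hτ.le) _)

lemma hasDerivAt_setIntegral_Ioo_of_vanishing_diagonal (hc : c < τ₀) (hR : τ₀ < R)
    (hF : ∀ τ, AEStronglyMeasurable (F τ) (volume.restrict (Ioo c R)))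
    (hF' : AEStronglyMeasurable F' (volume.restrict (Ioo c τ₀)))
    (hdiag : ∀ u ∈ Ioo c R, F u u = 0)
    (hlip : ∀ u ∈ Ioo c R, LipschitzOnWith K (F · u) (Icc u R))
    (hderiv : ∀ u ∈ Ioo c τ₀, HasDerivAt (F · u) (F' u) τ₀) :
    HasDerivAt (fun τ => ∫ u in Ioo c τ, F τ u) (∫ u in Ioo c τ₀, F' u) τ₀ := by
  have hinter : ∀ τ ≤ R, Iio τ ∩ Ioo c R = Ioo c τ := fun τ hτ => by
    rw [inter_comm, Ioo_inter_Iio, min_eq_right hτ]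
  have hrestrict := Measure.restrict_restrict (μ := volume) (s := Iio τ₀) (t := Ioo c R)
    measurableSet_Iio
  rw [hinter τ₀ hR.le] at hrestrict
  have hlip' := fun u (hu : u ∈ Ioo c R) =>
    lipschitzOnWith_indicator_Iio_of_vanishing_diagonal (hdiag u hu) hu.2.le (hlip u hu)
  have hbound : ∀ u ∈ Ioo c R, ‖(Iio τ₀).indicator (F τ₀) u‖ ≤ K * (τ₀ - c) := fun u hu => by
    simpa [norm_of_nonneg (sub_pos.2 hc).le, hu.1.le] using
      (hlip' u hu).norm_sub_le (x := τ₀) (y := c) hR.le (hc.trans hR).le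
  have hne : ∀ᵐ u ∂volume.restrict (Ioo c R), u ≠ τ₀ := ae_restrict_of_ae (Measure.ae_ne _ _)
  have hmain := (hasDerivAt_integral_of_dominated_loc_of_lip
    (μ := volume.restrict (Ioo c R)) (F := fun τ => (Iio τ).indicator (F τ))
    (F' := (Iio τ₀).indicator F') (bound := fun _ => (K : ℝ)) (Iic_mem_nhds hR)
    (Eventually.of_forall fun τ => (hF τ).indicator measurableSet_Iio)
    (.of_bound ((hF τ₀).indicator measurableSet_Iio) _
      (ae_restrict_of_forall_mem measurableSet_Ioo hbound))
    (by rwa [aestronglyMeasurable_indicator_iff measurableSet_Iio, hrestrict])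
    (ae_restrict_of_forall_mem measurableSet_Ioo fun u hu => by simpa using hlip' u hu)
    (integrable_const _)
    (by
      filter_upwards [hne, ae_restrict_mem measurableSet_Ioo] with u hne hu
      exact hasDerivAt_indicator_Iio hne fun h => hderiv u ⟨hu.1, h⟩)).2
  rw [MeasureTheory.integral_indicator measurableSet_Iio, hrestrict] at hmain
  refine hmain.congr_of_eventuallyEq ?_
  filter_upwards [Iic_mem_nhds hR] with τ hτ
  rw [MeasureTheory.integral_indicator measurableSet_Iio,
    Measure.restrict_restrict measurableSet_Iio, hinter τ hτ]

end Leibniz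

section Vasicek

variable {a δ : ℝ}

/-- The duration loading `B(u) = (1 - e^{-au}) / a` of the Vasicek bond price: `∂_r log M = -B`. -/
noncomputable def bondLoading (a u : ℝ) : ℝ := (1 - exp (-(a * u))) / a

/-- The logarithmic derivative of `M` in the time to maturity, as given by the bond equation. -/
noncomputable def bondRate (a δ b u r : ℝ) : ℝ :=
  a * (b - r) * -bondLoading a u + δ ^ 2 / 2 * bondLoading a u ^ 2 - r

/-- The mean of the Gaussian density `φ(·, u, r)`. -/
noncomputable def shortRateMean (a δ b u r : ℝ) : ℝ :=
  r * exp (-(a * u)) + b * (1 - exp (-(a * u))) - δ ^ 2 / (2 * a ^ 2) * (1 - exp (-(a * u))) ^ 2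

/-- The standard deviation of the Gaussian density `φ(·, u, r)`. -/
noncomputable def shortRateStd (a δ u : ℝ) : ℝ := √(δ ^ 2 * bondLoading (2 * a) u)

/-- The total volatility over the lag `u` of the ratio of the bonds with maturities `u` and `τ`. -/
noncomputable def optionVol (a δ τ u : ℝ) : ℝ := bondLoading a (τ - u) * shortRateStd a δ u

lemma exp_neg_two_mul_mul (x y : ℝ) : exp (-(2 * x * y)) = exp (-(x * y)) ^ 2 := by
  rw [← exp_nat_mul, Nat.cast_ofNat, mul_neg, mul_assoc]

lemma bondLoading_zero (a : ℝ) : bondLoading a 0 = 0 := by simp [bondLoading]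

lemma bondLoading_pos (ha : a ≠ 0) {u : ℝ} (hu : 0 < u) : 0 < bondLoading a u := by
  rcases ha.lt_or_gt with ha | ha
  · refine div_pos_of_neg_of_neg (sub_neg.2 (one_lt_exp_iff.2 ?_)) ha
    exact neg_pos.2 (mul_neg_of_neg_of_pos ha hu)
  · exact div_pos (sub_pos.2 (exp_lt_one_iff.2 (neg_lt_zero.2 (mul_pos ha hu)))) ha

lemma bondLoading_sub_bondLoading (a τ u : ℝ) :
    bondLoading a τ - bondLoading a u = exp (-(a * u)) * bondLoading a (τ - u) := by
  have hadd : exp (-(a * τ)) = exp (-(a * u)) * exp (-(a * (τ - u))) := by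
    rw [← exp_add]
    congr 1
    ring
  rw [bondLoading, bondLoading, bondLoading, hadd]
  ring

lemma exp_neg_mul_eq_one_sub_mul_bondLoading (ha : a ≠ 0) (u : ℝ) :
    exp (-(a * u)) = 1 - a * bondLoading a u := by
  rw [bondLoading, mul_div_cancel₀ _ ha, sub_sub_cancel]

lemma hasDerivAt_bondLoading (ha : a ≠ 0) (u : ℝ) :
    HasDerivAt (bondLoading a) (exp (-(a * u))) u := by
  refine ((((hasDerivAt_id u).const_mul a).neg.exp.const_sub 1).div_const a).congr_deriv ?_
  field_simp
  simp

@[fun_prop]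
lemma continuous_bondLoading (a : ℝ) : Continuous (bondLoading a) := by
  unfold bondLoading
  fun_prop

@[fun_prop]
lemma continuous_shortRateStd (a δ : ℝ) : Continuous (shortRateStd a δ) := by
  unfold shortRateStd
  fun_prop

@[fun_prop]
lemma continuous_M {X : Type*} [TopologicalSpace X] (a δ b : ℝ) {u r : X → ℝ} (hu : Continuous u)
    (hr : Continuous r) : Continuous fun x => M a δ b (u x) (r x) := by
  unfold M
  fun_prop

lemma M_pos (a δ b u r : ℝ) : 0 < M a δ b u r := exp_pos _

lemma M_zero (a δ b r : ℝ) : M a δ b 0 r = 1 := by simp [M]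

lemma hasDerivAt_M_rate (a δ b u r : ℝ) :
    HasDerivAt (M a δ b u) (-bondLoading a u * M a δ b u r) r := by
  have hexponent := ((((hasDerivAt_id r).const_sub (b - δ ^ 2 / (2 * a ^ 2))).div_const a).mul_const
    (1 - exp (-(a * u)))).const_add (-(b - δ ^ 2 / (2 * a ^ 2)) * u)
  refine (hexponent.sub_const (δ ^ 2 / (4 * a ^ 3) * (1 - exp (-(a * u))) ^ 2)).exp.congr_deriv ?_
  simp only [M, id, bondLoading]
  ring

lemma hasDerivAt_M_time (ha : a ≠ 0) (δ b u r : ℝ) :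
    HasDerivAt (fun u => M a δ b u r) (bondRate a δ b u r * M a δ b u r) u := by
  have hloading := (hasDerivAt_bondLoading ha u).const_mul (b - δ ^ 2 / (2 * a ^ 2) - r)
  have hconvexity := ((hasDerivAt_bondLoading ha u).pow 2).const_mul (δ ^ 2 / (4 * a))
  have hM : ∀ u, M a δ b u r = exp (-(b - δ ^ 2 / (2 * a ^ 2)) * u
      + (b - δ ^ 2 / (2 * a ^ 2) - r) * bondLoading a u
      - δ ^ 2 / (4 * a) * bondLoading a u ^ 2) := fun u => by
    rw [M, bondLoading]
    congr 1
    field_simp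
  rw [hM u, funext hM, mul_comm (bondRate a δ b u r)]
  refine ((((hasDerivAt_id u).const_mul _).add hloading).sub hconvexity).exp.congr_deriv ?_
  refine congr_arg _ ?_
  rw [exp_neg_mul_eq_one_sub_mul_bondLoading ha, bondRate]
  field_simp
  ring

lemma M_eq_exp_alphaCurve (ha : a ≠ 0) (δ b : ℝ) {T t : ℝ} (ht : t < T) (z : ℝ) :
    M a δ b (T - t) z = exp (-(bondLoading a (T - t) * (z - alphaCurve a δ b T t))) := by
  have hne : 1 - exp (-(a * (T - t))) ≠ 0 :=
    (div_ne_zero_iff.1 (bondLoading_pos ha (sub_pos.2 ht)).ne').1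
  rw [M, alphaCurve, bondLoading]
  congr 1
  field_simp
  ring

lemma shortRateStd_pos (ha : a ≠ 0) (hδ : δ ≠ 0) {u : ℝ} (hu : 0 < u) :
    0 < shortRateStd a δ u :=
  sqrt_pos.2 (mul_pos (by positivity) (bondLoading_pos (mul_ne_zero two_ne_zero ha) hu))

lemma shortRateStd_zero (a δ : ℝ) : shortRateStd a δ 0 = 0 := by
  rw [shortRateStd, bondLoading_zero, mul_zero, sqrt_zero]

lemma shortRateStd_sq (ha : a ≠ 0) (δ : ℝ) {u : ℝ} (hu : 0 < u) :
    shortRateStd a δ u ^ 2 = δ ^ 2 * bondLoading (2 * a) u :=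
  sq_sqrt (mul_nonneg (sq_nonneg δ) (bondLoading_pos (mul_ne_zero two_ne_zero ha) hu).le)

lemma hasDerivAt_shortRateStd (ha : a ≠ 0) (hδ : δ ≠ 0) {u : ℝ} (hu : 0 < u) :
    HasDerivAt (shortRateStd a δ) (δ ^ 2 / 2 * (exp (-(2 * a * u)) / shortRateStd a δ u)) u := by
  have ha' : 2 * a ≠ 0 := mul_ne_zero two_ne_zero ha
  have hpos : 0 < δ ^ 2 * bondLoading (2 * a) u := mul_pos (by positivity) (bondLoading_pos ha' hu)
  refine (((hasDerivAt_bondLoading ha' u).const_mul (δ ^ 2)).sqrt hpos.ne').congr_deriv ?_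
  rw [← shortRateStd]
  ring

/-- Near `u = 0` the integrand blows up like `u ^ (-1 / 2)`. -/
lemma integrableOn_exp_div_shortRateStd (ha : a ≠ 0) (hδ : δ ≠ 0) {τ : ℝ} (hτ : 0 ≤ τ) :
    IntegrableOn (fun u => exp (-(2 * a * u)) / shortRateStd a δ u) (Ioo 0 τ) := by
  have hderiv : ∀ u ∈ Ioo 0 τ, HasDerivAt (shortRateStd a δ)
      (δ ^ 2 / 2 * (exp (-(2 * a * u)) / shortRateStd a δ u)) u :=
    fun u hu => hasDerivAt_shortRateStd ha hδ hu.1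
  have hint := intervalIntegrable_deriv_of_nonneg (a := 0) (b := τ)
    (continuous_shortRateStd a δ).continuousOn
    (by rwa [min_eq_left hτ, max_eq_right hτ])
    (fun u _ => mul_nonneg (by positivity) (div_nonneg (exp_pos _).le (sqrt_nonneg _)))
  rw [intervalIntegrable_iff_integrableOn_Ioo_of_le hτ] at hint
  exact (integrable_const_mul_iff (IsUnit.mk0 (δ ^ 2 / 2) (by positivity)) _).1 hint

lemma phiKer_eq_gaussianPDFReal (ha : a ≠ 0) (δ b : ℝ) {u : ℝ} (hu : 0 < u) (z r : ℝ) :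
    phiKer a δ b z u r
      = gaussianPDFReal (shortRateMean a δ b u r) (shortRateStd a δ u ^ 2).toNNReal z := by
  rw [gaussianPDFReal, Real.coe_toNNReal _ (sq_nonneg _), shortRateStd_sq ha δ hu, phiKer,
    bondLoading, shortRateMean]
  congr 3
  · ring
  · ring
  · ring

/-- The semigroup property of the bond price: the factor
`M w (shortRateMean u r) * exp (B(w)² s(u)² / 2)` is the mean of `M w` under `φ(·, u, r)`. -/
lemma M_mul_M_shortRateMean (ha : a ≠ 0) (δ b : ℝ) {u : ℝ} (hu : 0 < u) (w r : ℝ) :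
    M a δ b u r * (M a δ b w (shortRateMean a δ b u r)
        * exp (bondLoading a w ^ 2 * shortRateStd a δ u ^ 2 / 2)) = M a δ b (u + w) r := by
  have hadd : exp (-(a * (u + w))) = exp (-(a * u)) * exp (-(a * w)) := by
    rw [← exp_add]
    congr 1
    ring
  rw [shortRateStd_sq ha δ hu, M, M, M, ← exp_add, ← exp_add, shortRateMean, bondLoading,
    bondLoading, hadd, exp_neg_two_mul_mul]
  congr 1
  field_simp
  ring

lemma optionVol_pos (ha : a ≠ 0) (hδ : δ ≠ 0) {τ u : ℝ} (hu : 0 < u) (hτ : u < τ) :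
    0 < optionVol a δ τ u :=
  mul_pos (bondLoading_pos ha (sub_pos.2 hτ)) (shortRateStd_pos ha hδ hu)

lemma optionVol_self (a δ u : ℝ) : optionVol a δ u u = 0 := by
  rw [optionVol, sub_self, bondLoading_zero, zero_mul]

lemma optionVol_zero (a δ τ : ℝ) : optionVol a δ τ 0 = 0 := by
  rw [optionVol, shortRateStd_zero, mul_zero]

@[fun_prop]
lemma continuous_optionVol {X : Type*} [TopologicalSpace X] (a δ : ℝ) {τ u : X → ℝ}
    (hτ : Continuous τ) (hu : Continuous u) : Continuous fun x => optionVol a δ (τ x) (u x) := by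
  unfold optionVol
  fun_prop

lemma hasDerivAt_optionVol_maturity (ha : a ≠ 0) (δ τ u : ℝ) :
    HasDerivAt (fun τ => optionVol a δ τ u) (exp (-(a * (τ - u))) * shortRateStd a δ u) τ :=
  ((hasDerivAt_bondLoading ha (τ - u)).comp_sub_const τ u).mul_const _

lemma hasDerivAt_optionVol_lag (ha : a ≠ 0) (hδ : δ ≠ 0) (τ : ℝ) {u : ℝ} (hu : 0 < u) :
    HasDerivAt (optionVol a δ τ)
      (δ ^ 2 / 2 * (bondLoading a (τ - u) * (exp (-(2 * a * u)) / shortRateStd a δ u))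
        - exp (-(a * (τ - u))) * shortRateStd a δ u) u := by
  refine (((hasDerivAt_bondLoading ha (τ - u)).comp_const_sub τ u).mul
    (hasDerivAt_shortRateStd ha hδ hu)).congr_deriv ?_
  ring

end Vasicek

section TimeValue

variable {a δ b : ℝ}

/-- The inner integral of `γ` at lag `u`, with time to maturity `τ = T - t`. -/
noncomputable def lagValue (a δ b τ u r : ℝ) : ℝ :=
  exchangeValue (M a δ b u r) (M a δ b τ r) (optionVol a δ τ u)

/-- The Greeks of `lagValue`, with the coefficients of the deltas relative to the bond prices. -/
noncomputable def lagGreeks (a δ b τ u r A B g : ℝ) : ℝ :=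
  exchangeGreeks (M a δ b u r) (M a δ b τ r) (optionVol a δ τ u) (A * M a δ b u r)
    (B * M a δ b τ r) g

/-- The function `γ` in terms of the time to maturity `τ = T - t`. -/
noncomputable def timeValue (a δ b τ r : ℝ) : ℝ := ∫ u in Ioo 0 τ, lagValue a δ b τ u r

lemma integral_Ioi_alphaCurve (ha : a ≠ 0) (hδ : δ ≠ 0) (b : ℝ) {T t u : ℝ} (hu : 0 < u)
    (hut : u < T - t) (r : ℝ) :
    ∫ z in Ioi (alphaCurve a δ b T (u + t)),
        M a δ b u r * (1 - M a δ b (T - u - t) z) * phiKer a δ b z u r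
      = lagValue a δ b (T - t) u r := by
  have hlt : u + t < T := by linarith
  have hw : T - u - t = T - (u + t) := by ring
  have hstrike := M_mul_M_shortRateMean ha δ b hu (T - (u + t)) r
  rw [M_eq_exp_alphaCurve ha δ b hlt, ← exp_add, neg_add_eq_sub,
    show u + (T - (u + t)) = T - t by ring] at hstrike
  simp_rw [hw, M_eq_exp_alphaCurve ha δ b hlt, phiKer_eq_gaussianPDFReal ha δ b hu]
  rw [setIntegral_Ioi_one_sub_exp_mul_gaussianPDFReal (M_pos a δ b u r).ne'
      (bondLoading_pos ha (sub_pos.2 hlt)) (shortRateStd_pos ha hδ hu), hstrike, lagValue,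
    optionVol, show T - (u + t) = T - t - u by ring]

lemma gammaFun_eq_timeValue (ha : a ≠ 0) (hδ : δ ≠ 0) (b : ℝ) {T t : ℝ} (ht : t ≤ T) (r : ℝ) :
    gammaFun a δ b T t r = timeValue a δ b (T - t) r := by
  rw [gammaFun, integral_of_le (sub_nonneg.2 ht), integral_Ioc_eq_integral_Ioo]
  exact setIntegral_congr_fun measurableSet_Ioo
    fun u hu => integral_Ioi_alphaCurve ha hδ b hu.1 hu.2 r

lemma lagValue_eq_lagGreeks (a δ b τ u r : ℝ) :
    lagValue a δ b τ u r = lagGreeks a δ b τ u r 1 1 0 := by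
  rw [lagValue, lagGreeks, exchangeValue_eq_exchangeGreeks, one_mul, one_mul]

lemma lagValue_self (a δ b u r : ℝ) : lagValue a δ b u u r = 0 := by
  simp [lagValue, exchangeValue, dPlus, optionVol_self]

@[fun_prop]
lemma measurable_lagGreeks {X : Type*} [MeasurableSpace X] [TopologicalSpace X]
    [OpensMeasurableSpace X] (a δ b : ℝ) {τ u r A B g : X → ℝ} (hτ : Continuous τ)
    (hu : Continuous u) (hr : Continuous r) (hA : Measurable A) (hB : Measurable B)
    (hg : Measurable g) :
    Measurable fun x => lagGreeks a δ b (τ x) (u x) (r x) (A x) (B x) (g x) := by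
  have hP : Measurable fun x => M a δ b (u x) (r x) := (continuous_M a δ b hu hr).measurable
  have hQ : Measurable fun x => M a δ b (τ x) (r x) := (continuous_M a δ b hτ hr).measurable
  have hv : Measurable fun x => optionVol a δ (τ x) (u x) :=
    (continuous_optionVol a δ hτ hu).measurable
  unfold lagGreeks
  fun_prop

lemma exists_abs_lagGreeks_le {X : Type*} [TopologicalSpace X] {S : Set X} (hS : IsCompact S)
    (a δ b : ℝ) {τ u r A B g : X → ℝ} (hτ : Continuous τ) (hu : Continuous u) (hr : Continuous r)
    (hA : Continuous A) (hB : Continuous B) (hg : Continuous g) :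
    ∃ C, ∀ x ∈ S, ∀ h : ℝ,
      |lagGreeks a δ b (τ x) (u x) (r x) (A x) (B x) (g x * h)| ≤ C * (1 + |h|) := by
  obtain ⟨C, hC⟩ := hS.exists_bound_of_continuousOn (f := fun x => |A x * M a δ b (u x) (r x)|
    + |B x * M a δ b (τ x) (r x)| + |g x| * |M a δ b (u x) (r x)|) (by fun_prop)
  refine ⟨C, fun x hx h => (abs_exchangeGreeks_le _ _ _ _ _ _).trans ?_⟩
  have hsum := (le_abs_self _).trans (hC x hx)
  set p := |A x * M a δ b (u x) (r x)|
  set q := |B x * M a δ b (τ x) (r x)|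
  set s := |g x| * |M a δ b (u x) (r x)|
  have hp : 0 ≤ p * |h| := by positivity
  have hq : 0 ≤ q * |h| := by positivity
  have hs : 0 ≤ s := by positivity
  calc p + q + |g x * h| * |M a δ b (u x) (r x)| = p + q + s * |h| := by
        rw [abs_mul]
        ring
    _ ≤ (p + q + s) * (1 + |h|) := by linarith
    _ ≤ C * (1 + |h|) := by gcongr

lemma hasDerivAt_lagGreeks_rate (ha : a ≠ 0) (hδ : δ ≠ 0) {τ u : ℝ} (hu : 0 < u) (hτ : u < τ)
    (r α β : ℝ) :
    HasDerivAt (fun r => lagGreeks a δ b τ u r α β 0)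
      (lagGreeks a δ b τ u r (α * -bondLoading a u) (β * -bondLoading a τ)
        ((α - β) * ((bondLoading a τ - bondLoading a u) / optionVol a δ τ u))) r := by
  have hv := (optionVol_pos ha hδ hu hτ).ne'
  have hP := hasDerivAt_M_rate a δ b u r
  have hQ := hasDerivAt_M_rate a δ b τ r
  have hd : HasDerivAt (fun r => dPlus (M a δ b u r) (M a δ b τ r) (optionVol a δ τ u))
      ((bondLoading a τ - bondLoading a u) / optionVol a δ τ u) r := by
    refine (hasDerivAt_dPlus hP hQ (hasDerivAt_const r _) (M_pos _ _ _ _ _).ne'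
      (M_pos _ _ _ _ _).ne' hv).congr_deriv ?_
    rw [mul_div_cancel_right₀ _ (M_pos _ _ _ _ _).ne',
      mul_div_cancel_right₀ _ (M_pos _ _ _ _ _).ne']
    ring
  refine (hasDerivAt_exchangeGreeks α β hP hQ (hasDerivAt_const r _) hd (M_pos _ _ _ _ _)
    (M_pos _ _ _ _ _) hv).congr_deriv ?_
  rw [lagGreeks, mul_zero, add_zero, mul_assoc, mul_assoc]

lemma hasDerivAt_lagValue_rate (ha : a ≠ 0) (hδ : δ ≠ 0) {τ u : ℝ} (hu : 0 < u) (hτ : u < τ)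
    (r : ℝ) :
    HasDerivAt (lagValue a δ b τ u)
      (lagGreeks a δ b τ u r (-bondLoading a u) (-bondLoading a τ) 0) r := by
  rw [show lagValue a δ b τ u = _ from funext (lagValue_eq_lagGreeks a δ b τ u)]
  simpa using hasDerivAt_lagGreeks_rate (b := b) ha hδ hu hτ r 1 1

lemma hasDerivAt_lagGreeks_bondLoading_rate (ha : a ≠ 0) (hδ : δ ≠ 0) {τ u : ℝ} (hu : 0 < u)
    (hτ : u < τ) (r : ℝ) :
    HasDerivAt (fun r => lagGreeks a δ b τ u r (-bondLoading a u) (-bondLoading a τ) 0)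
      (lagGreeks a δ b τ u r (bondLoading a u ^ 2) (bondLoading a τ ^ 2)
        (bondLoading a (τ - u) * (exp (-(2 * a * u)) / shortRateStd a δ u))) r := by
  have hB := (bondLoading_pos ha (sub_pos.2 hτ)).ne'
  have hs := (shortRateStd_pos ha hδ hu).ne'
  refine (hasDerivAt_lagGreeks_rate ha hδ hu hτ r _ _).congr_deriv ?_
  congr 1
  · ring
  · ring
  · rw [neg_sub_neg, bondLoading_sub_bondLoading, optionVol, exp_neg_two_mul_mul]
    field_simp

lemma hasDerivAt_lagValue_maturity (ha : a ≠ 0) (hδ : δ ≠ 0) {τ u : ℝ} (hu : 0 < u) (hτ : u < τ)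
    (r : ℝ) :
    HasDerivAt (fun τ => lagValue a δ b τ u r)
      (lagGreeks a δ b τ u r 0 (bondRate a δ b τ r)
        (exp (-(a * (τ - u))) * shortRateStd a δ u)) τ := by
  refine (hasDerivAt_exchangeValue (hasDerivAt_const τ _) (hasDerivAt_M_time ha δ b τ r)
    (hasDerivAt_optionVol_maturity ha δ τ u) (M_pos _ _ _ _ _) (M_pos _ _ _ _ _)
    (optionVol_pos ha hδ hu hτ).ne').congr_deriv ?_
  rw [lagGreeks, zero_mul]

lemma hasDerivAt_lagValue_lag (ha : a ≠ 0) (hδ : δ ≠ 0) {τ u : ℝ} (hu : 0 < u) (hτ : u < τ)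
    (r : ℝ) :
    HasDerivAt (fun u => lagValue a δ b τ u r)
      (lagGreeks a δ b τ u r (bondRate a δ b u r) 0
        (δ ^ 2 / 2 * (bondLoading a (τ - u) * (exp (-(2 * a * u)) / shortRateStd a δ u))
          - exp (-(a * (τ - u))) * shortRateStd a δ u)) u := by
  refine (hasDerivAt_exchangeValue (hasDerivAt_M_time ha δ b u r) (hasDerivAt_const u _)
    (hasDerivAt_optionVol_lag ha hδ τ hu) (M_pos _ _ _ _ _) (M_pos _ _ _ _ _)
    (optionVol_pos ha hδ hu hτ).ne').congr_deriv ?_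
  rw [lagGreeks, zero_mul]

lemma tendsto_lagValue (ha : a ≠ 0) (hδ : δ ≠ 0) {ι : Type*} {l : Filter ι} {τ u : ι → ℝ}
    {τ₀ u₀ : ℝ} (hτ : Tendsto τ l (𝓝 τ₀)) (hu : Tendsto u l (𝓝 u₀))
    (hlt : ∀ᶠ i in l, u i ∈ Ioo 0 (τ i)) (hv : optionVol a δ τ₀ u₀ = 0) (r : ℝ) :
    Tendsto (fun i => lagValue a δ b (τ i) (u i) r) l
      (𝓝 (max (M a δ b u₀ r - M a δ b τ₀ r) 0)) := by
  have hM : Continuous fun w => M a δ b w r := by fun_prop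
  have hvol : Tendsto (fun i => optionVol a δ (τ i) (u i)) l (𝓝 (optionVol a δ τ₀ u₀)) :=
    (((continuous_bondLoading a).tendsto _).comp (hτ.sub hu)).mul
      (((continuous_shortRateStd a δ).tendsto _).comp hu)
  rw [hv] at hvol
  exact tendsto_exchangeValue (M_pos _ _ _ _ _) (M_pos _ _ _ _ _) ((hM.tendsto _).comp hu)
    ((hM.tendsto _).comp hτ) (tendsto_nhdsWithin_iff.2 ⟨hvol, hlt.mono fun i hi =>
      optionVol_pos ha hδ hi.1 hi.2⟩)

lemma exists_lipschitzOnWith_lagValue_maturity (ha : a ≠ 0) (hδ : δ ≠ 0) (R r : ℝ) :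
    ∃ K, ∀ u ∈ Ioo 0 R, LipschitzOnWith K (fun τ => lagValue a δ b τ u r) (Icc u R) := by
  obtain ⟨C, hC⟩ := exists_abs_lagGreeks_le (S := Icc 0 R ×ˢ Icc 0 R)
    (isCompact_Icc.prod isCompact_Icc) a δ b (τ := Prod.fst) (u := Prod.snd) (r := fun _ => r)
    (A := fun _ => 0) (B := fun x => bondRate a δ b x.1 r)
    (g := fun x => exp (-(a * (x.1 - x.2))) * shortRateStd a δ x.2) (by fun_prop) (by fun_prop)
    (by fun_prop) (by fun_prop) (by unfold bondRate; fun_prop) (by fun_prop)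
  refine ⟨(C * 2).toNNReal, fun u hu => ?_⟩
  have hinterior : LipschitzOnWith (C * 2).toNNReal (fun τ => lagValue a δ b τ u r) (Ioo u R) := by
    refine (convex_Ioo u R).lipschitzOnWith_of_nnnorm_hasDerivWithin_le
      (fun τ hτ => (hasDerivAt_lagValue_maturity ha hδ hu.1 hτ.1 r).hasDerivWithinAt)
      fun τ hτ => ?_
    have hle := hC (τ, u) ⟨⟨(hu.1.trans hτ.1).le, hτ.2.le⟩, ⟨hu.1.le, hu.2.le⟩⟩ 1
    rw [mul_one, abs_one, one_add_one_eq_two] at hle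
    exact NNReal.coe_le_coe.1 (hle.trans (le_coe_toNNReal _))
  rw [← closure_Ioo hu.2.ne]
  refine hinterior.closure ?_
  rw [closure_Ioo hu.2.ne]
  rintro τ ⟨hτ, -⟩
  rcases hτ.eq_or_lt with rfl | hτ
  · have hlim := tendsto_lagValue (b := b) ha hδ (l := 𝓝[>] u) (u := fun _ => u) nhdsWithin_le_nhds
      tendsto_const_nhds (eventually_mem_nhdsWithin.mono fun τ hτ => ⟨hu.1, hτ⟩)
      (optionVol_self a δ u) r
    rw [sub_self, max_self, ← lagValue_self a δ b u r] at hlim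
    exact (continuousWithinAt_Ioi_iff_Ici.1 hlim).mono Icc_subset_Ici_self
  · exact (hasDerivAt_lagValue_maturity ha hδ hu.1 hτ r).continuousAt.continuousWithinAt

lemma integrableOn_lagGreeks (a δ b τ r : ℝ) {A B g h : ℝ → ℝ} (hA : Continuous A)
    (hB : Continuous B) (hg : Continuous g) (hh : Measurable h) (hint : IntegrableOn h (Ioo 0 τ)) :
    IntegrableOn (fun u => lagGreeks a δ b τ u r (A u) (B u) (g u * h u)) (Ioo 0 τ) := by
  obtain ⟨C, hC⟩ := exists_abs_lagGreeks_le (isCompact_Icc (a := 0) (b := τ)) a δ b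
    (τ := fun _ => τ) (r := fun _ => r) (by fun_prop) continuous_id (by fun_prop) hA hB hg
  have hbound : IntegrableOn (fun u => C * (1 + |h u|)) (Ioo 0 τ) :=
    ((integrable_const 1).add hint.abs).const_mul C
  refine hbound.mono' (Measurable.aestronglyMeasurable (by fun_prop))
    (ae_restrict_of_forall_mem measurableSet_Ioo fun u hu => hC u ?_ (h u))
  exact Ioo_subset_Icc_self hu

lemma integrableOn_lagGreeks_zero (a δ b τ r : ℝ) {A B : ℝ → ℝ} (hA : Continuous A)
    (hB : Continuous B) :
    IntegrableOn (fun u => lagGreeks a δ b τ u r (A u) (B u) 0) (Ioo 0 τ) := by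
  simpa using integrableOn_lagGreeks a δ b τ r hA hB continuous_zero measurable_zero
    integrableOn_zero

lemma hasDerivAt_setIntegral_lagGreeks_rate {τ : ℝ} {A B A' B' g h : ℝ → ℝ} (hA : Continuous A)
    (hB : Continuous B) (hA' : Continuous A') (hB' : Continuous B') (hg : Continuous g)
    (hh : Measurable h) (hint : IntegrableOn h (Ioo 0 τ))
    (hderiv : ∀ u ∈ Ioo 0 τ, ∀ r, HasDerivAt (fun r => lagGreeks a δ b τ u r (A u) (B u) 0)
      (lagGreeks a δ b τ u r (A' u) (B' u) (g u * h u)) r) (r : ℝ) :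
    HasDerivAt (fun r => ∫ u in Ioo 0 τ, lagGreeks a δ b τ u r (A u) (B u) 0)
      (∫ u in Ioo 0 τ, lagGreeks a δ b τ u r (A' u) (B' u) (g u * h u)) r := by
  obtain ⟨C, hC⟩ := exists_abs_lagGreeks_le (S := Icc 0 τ ×ˢ Icc (r - 1) (r + 1))
    (isCompact_Icc.prod isCompact_Icc) a δ b (τ := fun _ => τ) (by fun_prop) continuous_fst
    continuous_snd (hA'.comp continuous_fst) (hB'.comp continuous_fst) (hg.comp continuous_fst)
  exact (_root_.hasDerivAt_integral_of_dominated_loc_of_deriv_le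
    (μ := volume.restrict (Ioo 0 τ)) (F := fun r u => lagGreeks a δ b τ u r (A u) (B u) 0)
    (bound := fun u => C * (1 + |h u|))
    (Icc_mem_nhds (sub_one_lt r) (lt_add_one r))
    (Eventually.of_forall fun r => Measurable.aestronglyMeasurable (by fun_prop))
    (integrableOn_lagGreeks_zero a δ b τ r hA hB)
    (Measurable.aestronglyMeasurable (by fun_prop))
    (ae_restrict_of_forall_mem measurableSet_Ioo fun u hu r hr =>
      hC (u, r) ⟨Ioo_subset_Icc_self hu, hr⟩ (h u))
    (((integrable_const 1).add hint.abs).const_mul C)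
    (ae_restrict_of_forall_mem measurableSet_Ioo fun u hu r _ => hderiv u hu r)).2

/-- The derivative of `timeValue` in the rate. -/
noncomputable def timeValueDelta (a δ b τ r : ℝ) : ℝ :=
  ∫ u in Ioo 0 τ, lagGreeks a δ b τ u r (-bondLoading a u) (-bondLoading a τ) 0

/-- The second derivative of `timeValue` in the rate. -/
noncomputable def timeValueGamma (a δ b τ r : ℝ) : ℝ :=
  ∫ u in Ioo 0 τ, lagGreeks a δ b τ u r (bondLoading a u ^ 2) (bondLoading a τ ^ 2)
    (bondLoading a (τ - u) * (exp (-(2 * a * u)) / shortRateStd a δ u))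

/-- The derivative of `timeValue` in the time to maturity. -/
noncomputable def timeValueTheta (a δ b τ r : ℝ) : ℝ :=
  ∫ u in Ioo 0 τ, lagGreeks a δ b τ u r 0 (bondRate a δ b τ r)
    (exp (-(a * (τ - u))) * shortRateStd a δ u)

lemma hasDerivAt_timeValue_rate (ha : a ≠ 0) (hδ : δ ≠ 0) (b τ r : ℝ) :
    HasDerivAt (timeValue a δ b τ) (timeValueDelta a δ b τ r) r := by
  have h := hasDerivAt_setIntegral_lagGreeks_rate (b := b) (A := 1) (B := 1)
    (B' := fun _ => -bondLoading a τ) (g := 0) (h := 0) continuous_one continuous_one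
    (continuous_bondLoading a).neg continuous_const continuous_zero measurable_zero
    integrableOn_zero (fun u hu r => by
      simpa [← lagValue_eq_lagGreeks] using hasDerivAt_lagValue_rate ha hδ hu.1 hu.2 r) r
  simp only [Pi.one_apply, Pi.zero_apply, zero_mul, ← lagValue_eq_lagGreeks] at h
  exact h

lemma hasDerivAt_timeValueDelta_rate (ha : a ≠ 0) (hδ : δ ≠ 0) (b : ℝ) {τ : ℝ} (hτ : 0 ≤ τ)
    (r : ℝ) : HasDerivAt (timeValueDelta a δ b τ) (timeValueGamma a δ b τ r) r :=
  hasDerivAt_setIntegral_lagGreeks_rate (A' := fun u => bondLoading a u ^ 2)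
    (B' := fun _ => bondLoading a τ ^ 2) (g := fun u => bondLoading a (τ - u))
    (continuous_bondLoading a).neg continuous_const (by fun_prop) (by fun_prop) (by fun_prop)
    (by fun_prop) (integrableOn_exp_div_shortRateStd ha hδ hτ)
    (fun _ hu => hasDerivAt_lagGreeks_bondLoading_rate ha hδ hu.1 hu.2) r

lemma hasDerivAt_timeValue_maturity (ha : a ≠ 0) (hδ : δ ≠ 0) (b : ℝ) {τ : ℝ} (hτ : 0 < τ)
    (r : ℝ) : HasDerivAt (fun τ => timeValue a δ b τ r) (timeValueTheta a δ b τ r) τ := by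
  obtain ⟨K, hK⟩ := exists_lipschitzOnWith_lagValue_maturity (b := b) ha hδ (τ + 1) r
  refine hasDerivAt_setIntegral_Ioo_of_vanishing_diagonal hτ (lt_add_one τ) (fun τ => ?_)
    ?_ (fun u _ => lagValue_self a δ b u r) hK
    fun u hu => hasDerivAt_lagValue_maturity ha hδ hu.1 hu.2 r
  · simp_rw [lagValue_eq_lagGreeks]
    fun_prop
  · exact Measurable.aestronglyMeasurable (by fun_prop)

/-- On `lagValue` this reads `∂_u = a (b - r) ∂_r + (δ² / 2) ∂_rr - r - ∂_τ`. -/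
lemma lagGreeks_lag_eq (a δ b τ u r : ℝ) :
    lagGreeks a δ b τ u r (bondRate a δ b u r) 0
        (δ ^ 2 / 2 * (bondLoading a (τ - u) * (exp (-(2 * a * u)) / shortRateStd a δ u))
          - exp (-(a * (τ - u))) * shortRateStd a δ u)
      = a * (b - r) * lagGreeks a δ b τ u r (-bondLoading a u) (-bondLoading a τ) 0
        + δ ^ 2 / 2 * lagGreeks a δ b τ u r (bondLoading a u ^ 2) (bondLoading a τ ^ 2)
          (bondLoading a (τ - u) * (exp (-(2 * a * u)) / shortRateStd a δ u))
        - r * lagValue a δ b τ u r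
        - lagGreeks a δ b τ u r 0 (bondRate a δ b τ r)
          (exp (-(a * (τ - u))) * shortRateStd a δ u) := by
  simp only [lagValue_eq_lagGreeks, lagGreeks, exchangeGreeks, bondRate]
  ring

lemma integral_lagGreeks_lag (ha : a ≠ 0) (hδ : δ ≠ 0) (b : ℝ) {τ : ℝ} (hτ : 0 < τ) (r : ℝ)
    (hint : IntegrableOn (fun u => lagGreeks a δ b τ u r (bondRate a δ b u r) 0
      (δ ^ 2 / 2 * (bondLoading a (τ - u) * (exp (-(2 * a * u)) / shortRateStd a δ u))
        - exp (-(a * (τ - u))) * shortRateStd a δ u)) (Ioo 0 τ)) :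
    ∫ u in Ioo 0 τ, lagGreeks a δ b τ u r (bondRate a δ b u r) 0
      (δ ^ 2 / 2 * (bondLoading a (τ - u) * (exp (-(2 * a * u)) / shortRateStd a δ u))
        - exp (-(a * (τ - u))) * shortRateStd a δ u) = -max (1 - M a δ b τ r) 0 := by
  have hleft := tendsto_lagValue (b := b) ha hδ (l := 𝓝[>] 0) (τ := fun _ => τ) (u := id)
    tendsto_const_nhds nhdsWithin_le_nhds (Ioo_mem_nhdsGT hτ) (optionVol_zero a δ τ) r
  have hright := tendsto_lagValue (b := b) ha hδ (l := 𝓝[<] τ) (τ := fun _ => τ) (u := id)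
    tendsto_const_nhds nhdsWithin_le_nhds (Ioo_mem_nhdsLT hτ) (optionVol_self a δ τ) r
  rw [M_zero] at hleft
  rw [sub_self, max_self] at hright
  rw [← integral_Ioc_eq_integral_Ioo, ← integral_of_le hτ.le,
    integral_eq_sub_of_hasDerivAt_of_tendsto hτ
      (fun u hu => hasDerivAt_lagValue_lag ha hδ hu.1 hu.2 r)
      ((intervalIntegrable_iff_integrableOn_Ioo_of_le hτ.le).2 hint) hleft hright, zero_sub]

lemma timeValueTheta_eq (ha : a ≠ 0) (hδ : δ ≠ 0) (b : ℝ) {τ : ℝ} (hτ : 0 < τ) (r : ℝ) :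
    timeValueTheta a δ b τ r = a * (b - r) * timeValueDelta a δ b τ r
      + δ ^ 2 / 2 * timeValueGamma a δ b τ r - r * timeValue a δ b τ r
      + max (1 - M a δ b τ r) 0 := by
  have hΘ : IntegrableOn (fun u => lagGreeks a δ b τ u r 0 (bondRate a δ b τ r)
      (exp (-(a * (τ - u))) * shortRateStd a δ u)) (Ioo 0 τ) := by
    simpa using integrableOn_lagGreeks a δ b τ r (A := 0) (h := 1) continuous_zero
      continuous_const (by fun_prop) measurable_one (integrable_const 1)
  have hvalue : IntegrableOn (fun u => lagValue a δ b τ u r) (Ioo 0 τ) := by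
    simpa only [lagValue_eq_lagGreeks] using
      integrableOn_lagGreeks_zero a δ b τ r continuous_const continuous_const
  have hΔ := integrableOn_lagGreeks_zero a δ b τ r (A := fun u => -bondLoading a u)
    (B := fun _ => -bondLoading a τ) (by fun_prop) (by fun_prop)
  have hΓ := integrableOn_lagGreeks a δ b τ r (A := fun u => bondLoading a u ^ 2)
    (B := fun _ => bondLoading a τ ^ 2) (g := fun u => bondLoading a (τ - u)) (by fun_prop)
    (by fun_prop) (by fun_prop) (by fun_prop) (integrableOn_exp_div_shortRateStd ha hδ hτ.le)
  have hΔΓ := (hΔ.const_mul (a * (b - r))).add (hΓ.const_mul (δ ^ 2 / 2))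
  have hgen := hΔΓ.sub (hvalue.const_mul r)
  have hlag := integral_lagGreeks_lag ha hδ b hτ r
  simp_rw [lagGreeks_lag_eq] at hlag
  specialize hlag (hgen.sub hΘ)
  rw [MeasureTheory.integral_sub, MeasureTheory.integral_sub, MeasureTheory.integral_add,
    MeasureTheory.integral_const_mul, MeasureTheory.integral_const_mul,
    MeasureTheory.integral_const_mul] at hlag
  · rw [timeValueTheta, timeValueDelta, timeValueGamma, timeValue]
    linarith
  exacts [hΔ.const_mul _, hΓ.const_mul _, hΔΓ, hvalue.const_mul r, hgen, hΘ]

end TimeValue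

lemma iSup_Icc_mul_eq_mul_max {ξ : ℝ} (hξ : 0 ≤ ξ) (y : ℝ) :
    ⨆ c : Icc 0 ξ, (c : ℝ) * y = ξ * max y 0 := by
  have hle : ∀ c : Icc 0 ξ, (c : ℝ) * y ≤ ξ * max y 0 := fun c =>
    (mul_le_mul_of_nonneg_left (le_max_left y 0) c.2.1).trans
      (mul_le_mul_of_nonneg_right c.2.2 (le_max_right y 0))
  have : Nonempty (Icc 0 ξ) := ⟨⟨0, left_mem_Icc.2 hξ⟩⟩
  refine le_antisymm (ciSup_le hle) ?_
  have hbdd : BddAbove (range fun c : Icc 0 ξ => (c : ℝ) * y) := ⟨_, forall_mem_range.2 hle⟩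
  rcases le_total 0 y with hy | hy
  · rw [max_eq_left hy]
    exact le_ciSup hbdd ⟨ξ, right_mem_Icc.2 hξ⟩
  · rw [max_eq_right hy, mul_zero]
    exact (zero_mul y).symm.trans_le (le_ciSup hbdd ⟨0, left_mem_Icc.2 hξ⟩)

section ValueFunction

variable {a δ T t : ℝ}

lemma vFun_eq (ha : a ≠ 0) (hδ : δ ≠ 0) (b μ ξ : ℝ) (ht : t ≤ T) (r x : ℝ) :
    vFun a δ b T μ ξ t r x
      = (x + μ * (T - t)) * M a δ b (T - t) r + ξ * timeValue a δ b (T - t) r := by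
  rw [vFun, gammaFun_eq_timeValue ha hδ b ht]
  ring

lemma hasDerivAt_vFun_wealth (a δ b T μ ξ t r x : ℝ) :
    HasDerivAt (vFun a δ b T μ ξ t r) (M a δ b (T - t) r) x :=
  ((((hasDerivAt_id x).mul_const _).add_const _).add_const _).congr_deriv (one_mul _)

lemma hasDerivAt_vFun_rate (ha : a ≠ 0) (hδ : δ ≠ 0) (b μ ξ : ℝ) (ht : t ≤ T) (r x : ℝ) :
    HasDerivAt (fun r => vFun a δ b T μ ξ t r x)
      ((x + μ * (T - t)) * (-bondLoading a (T - t) * M a δ b (T - t) r)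
        + ξ * timeValueDelta a δ b (T - t) r) r := by
  simp_rw [vFun_eq ha hδ b μ ξ ht]
  exact ((hasDerivAt_M_rate a δ b (T - t) r).const_mul _).add
    ((hasDerivAt_timeValue_rate ha hδ b (T - t) r).const_mul ξ)

lemma hasDerivAt_deriv_vFun_rate (ha : a ≠ 0) (hδ : δ ≠ 0) (b μ ξ : ℝ) (ht : t ≤ T) (r x : ℝ) :
    HasDerivAt (deriv fun r => vFun a δ b T μ ξ t r x)
      ((x + μ * (T - t)) * (bondLoading a (T - t) ^ 2 * M a δ b (T - t) r)
        + ξ * timeValueGamma a δ b (T - t) r) r := by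
  rw [funext fun r => (hasDerivAt_vFun_rate ha hδ b μ ξ ht r x).deriv]
  refine ((((hasDerivAt_M_rate a δ b (T - t) r).const_mul _).const_mul _).add
    ((hasDerivAt_timeValueDelta_rate ha hδ b (sub_nonneg.2 ht) r).const_mul ξ)).congr_deriv ?_
  ring

lemma hasDerivAt_vFun_time (ha : a ≠ 0) (hδ : δ ≠ 0) (b μ ξ : ℝ) (ht : t < T) (r x : ℝ) :
    HasDerivAt (fun t => vFun a δ b T μ ξ t r x)
      (-(μ * M a δ b (T - t) r
        + (x + μ * (T - t)) * (bondRate a δ b (T - t) r * M a δ b (T - t) r)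
        + ξ * timeValueTheta a δ b (T - t) r)) t := by
  have hcash : HasDerivAt (fun t => x + μ * (T - t)) (-μ) t := by
    simpa using (((hasDerivAt_id t).const_sub T).const_mul μ).const_add x
  have hM := (hasDerivAt_M_time ha δ b (T - t) r).comp_const_sub T t
  have hγ := (hasDerivAt_timeValue_maturity ha hδ b (sub_pos.2 ht) r).comp_const_sub T t
  refine (((hcash.mul hM).add (hγ.const_mul ξ)).congr_of_eventuallyEq ?_).congr_deriv ?_
  · filter_upwards [gt_mem_nhds ht] with s hs using vFun_eq ha hδ b μ ξ hs.le r x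
  · ring

end ValueFunction

theorem v_solves_HJB_general {a δ : ℝ} (ha : a ≠ 0) (hδ : δ ≠ 0) (b T μ σ : ℝ) {ξ : ℝ}
    (hξ : 0 ≤ ξ) {t : ℝ} (ht : t < T) (r x : ℝ) :
    deriv (fun t' => vFun a δ b T μ ξ t' r x) t
        + μ * deriv (fun x' => vFun a δ b T μ ξ t r x') x
        + σ ^ 2 / 2 * deriv (deriv (fun x' => vFun a δ b T μ ξ t r x')) x
        + a * (b - r) * deriv (fun r' => vFun a δ b T μ ξ t r' x) r
        + δ ^ 2 / 2 * deriv (deriv (fun r' => vFun a δ b T μ ξ t r' x)) r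
        - r * vFun a δ b T μ ξ t r x
        + ξ * max (1 - deriv (fun x' => vFun a δ b T μ ξ t r x') x) 0 = 0 ∧
      ξ * max (1 - deriv (fun x' => vFun a δ b T μ ξ t r x') x) 0
        = ⨆ c : Icc (0 : ℝ) ξ,
            (c : ℝ) * (1 - deriv (fun x' => vFun a δ b T μ ξ t r x') x) := by
  have hwealth : deriv (vFun a δ b T μ ξ t r) = fun _ => M a δ b (T - t) r :=
    funext fun x => (hasDerivAt_vFun_wealth a δ b T μ ξ t r x).deriv
  refine ⟨?_, (iSup_Icc_mul_eq_mul_max hξ _).symm⟩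
  rw [hwealth, deriv_const, (hasDerivAt_vFun_time ha hδ b μ ξ ht r x).deriv,
    (hasDerivAt_vFun_rate ha hδ b μ ξ ht.le r x).deriv,
    (hasDerivAt_deriv_vFun_rate ha hδ b μ ξ ht.le r x).deriv, vFun_eq ha hδ b μ ξ ht.le,
    timeValueTheta_eq ha hδ b (sub_pos.2 ht), bondRate]
  ring

/-- assuming `b̃ > 0`, `v` solves the HJB equation
`∂_t v + μ∂_x v + (σ²/2)∂_{xx} v + a(b−r)∂_r v + (δ²/2)∂_{rr} v − rv + ξ·max(1−∂_x v,0) = 0`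
on `(0,T) × ℝ × ℝ`, where `ξ·max(1−∂_x v,0) = sup_{0 ≤ c ≤ ξ} c(1−∂_x v)`. -/
theorem v_solves_HJB (a δ b T μ ξ σ : ℝ) (ha : 0 < a) (hδ : 0 < δ) (hT : 0 < T)
    (hb : 0 < b - δ^2/(2*a^2)) (hμ : 0 < μ) (hξ : 0 < ξ) (hσ : 0 < σ) :
    ∀ t : ℝ, 0 < t → t < T → ∀ r x : ℝ,
      deriv (fun t' => vFun a δ b T μ ξ t' r x) t
        + μ * deriv (fun x' => vFun a δ b T μ ξ t r x') x
        + σ^2/2 * deriv (deriv (fun x' => vFun a δ b T μ ξ t r x')) x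
        + a*(b - r) * deriv (fun r' => vFun a δ b T μ ξ t r' x) r
        + δ^2/2 * deriv (deriv (fun r' => vFun a δ b T μ ξ t r' x)) r
        - r * vFun a δ b T μ ξ t r x
        + ξ * max (1 - deriv (fun x' => vFun a δ b T μ ξ t r x') x) 0 = 0 ∧
      ξ * max (1 - deriv (fun x' => vFun a δ b T μ ξ t r x') x) 0
        = ⨆ c : Set.Icc (0:ℝ) ξ,
            (c : ℝ) * (1 - deriv (fun x' => vFun a δ b T μ ξ t r x') x) :=
  fun _ _ ht r x => v_solves_HJB_general ha.ne' hδ.ne' b T μ σ hξ.le ht r x
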